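/- With notation as in the localization lemma: let L be a one-sided ladder with distinguished points (a_1,b_1),...,(a_s,b_s), sizes t, and (u,v) ∈ L a point lying exactly in the regions L_j,...,L_k with t_i ≥ 2 for j ≤ i ≤ k. Let L̂ be the modified ladder and r = (t_1,...,t_{j-1}, t_j - 1,...,t_k - 1, t_{k+1},...,t_s). Then there is a K-algebra isomorphism K[L]/I_t(L)[x_{u,v}^{-1}] ≅ K[L̂]/I_r(L̂)[x_{a_{j-1}+1,v},...,x_{a_k,v}, x_{u,b_j},...,x_{u,b_{k+1}-1}, x_{u,v}^{-1}]. -/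

import Mathlib

open MvPolynomial

variable {K : Type*} [Field K]

/-- Any `K`-algebra structure on a ring localizes. -/
noncomputable instance locAwayAlgebra {K R : Type*} [CommSemiring K] [CommRing R]
    [Algebra K R] (x : R) : Algebra K (Localization.Away x) :=
  ((algebraMap R (Localization.Away x)).comp (algebraMap K R)).toAlgebra

/-- The region `L_i = {(x,y) : 1 ≤ x ≤ a_i, b_i ≤ y ≤ n}` of the grid determined by a
distinguished point `(a_i, b_i)` (1-based coordinates). -/
def ladderRegion (a b : ℕ → ℕ) (n : ℕ) (i : ℕ) : Set (ℕ × ℕ) :=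
  {p | 1 ≤ p.1 ∧ p.1 ≤ a i ∧ b i ≤ p.2 ∧ p.2 ≤ n}

/-- The mixed ladder determinantal ideal `I_t(L)` in `K[L]`. -/
noncomputable def mixedLadderIdeal (K : Type*) [Field K] (V : Set (ℕ × ℕ))
    (a b t : ℕ → ℕ) (n s : ℕ) : Ideal (MvPolynomial V K) :=
  ⨆ i ∈ Set.Icc 1 s, Ideal.span
    {p | ∃ r c : Fin (t i) → ℕ, StrictMono r ∧ StrictMono c ∧
      ∃ h : ∀ x y : Fin (t i), (r x, c y) ∈ ladderRegion a b n i ∧ (r x, c y) ∈ V,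
      p = Matrix.det (Matrix.of fun x y => (MvPolynomial.X ⟨(r x, c y), (h x y).2⟩ :
        MvPolynomial V K))}

/-- The row relabelling of the construction of `L̂`: row `u` is moved just below row `a_k`
(rows strictly between are shifted up by one, all other rows are unchanged). -/
def rowPerm (u ak : ℕ) (i : ℕ) : ℕ :=
  if i < u then i else if i = u then ak else if i ≤ ak then i - 1 else i

/-- The column relabelling of the construction of `L̂`: column `v` is moved just to the left
of column `b_j` (columns in between are shifted right by one, the others unchanged). -/
def colPerm (v bj : ℕ) (c : ℕ) : ℕ :=
  if c < bj then c else if c = v then bj else if c < v then c + 1 else c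

/-- The entries of `L` kept in the construction of `L̂`: all entries off row `u` and column
`v`, the entries of row `u` lying in `L_{k+1}` (columns `≥ b_{k+1}`), and the entries of
column `v` lying in `L_{j-1}` (rows `≤ a_{j-1}`). -/
def keptEntries (L : Set (ℕ × ℕ)) (a b : ℕ → ℕ) (u v j k : ℕ) : Set (ℕ × ℕ) :=
  {p ∈ L | (p.1 ≠ u ∧ p.2 ≠ v) ∨ (p.1 = u ∧ b (k + 1) ≤ p.2) ∨
    (p.2 = v ∧ p.1 ≤ a (j - 1))}

/-- The ladder `L̂` obtained from `L` by deleting the appropriate entries of row `u` and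
column `v` and relabelling. -/
def ladderHat (L : Set (ℕ × ℕ)) (a b : ℕ → ℕ) (u v j k : ℕ) : Set (ℕ × ℕ) :=
  (fun p => (rowPerm u (a k) p.1, colPerm v (b j) p.2)) '' keptEntries L a b u v j k

/-- The extra (free) variables adjoined on the right-hand side:
`x_{a_{j-1}+1,v}, …, x_{a_k,v}` and `x_{u,b_j}, …, x_{u,b_{k+1}-1}`. -/
def extraVars (a b : ℕ → ℕ) (u v j k : ℕ) : Set (ℕ × ℕ) :=
  {p | (p.2 = v ∧ a (j - 1) < p.1 ∧ p.1 ≤ a k) ∨ (p.1 = u ∧ b j ≤ p.2 ∧ p.2 < b (k + 1))}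

/-- The ideal `I_r(L̂)` of the ring `K[L̂][extra variables]` (the variables are indexed by the
sum type `↥L̂ ⊕ ↥E`, the minors being taken in the `L̂`-variables). -/
noncomputable def mixedLadderIdealHat (K : Type*) [Field K] (Lhat E : Set (ℕ × ℕ))
    (a b t : ℕ → ℕ) (n s : ℕ) : Ideal (MvPolynomial (↥Lhat ⊕ ↥E) K) :=
  ⨆ i ∈ Set.Icc 1 s, Ideal.span
    {p | ∃ r c : Fin (t i) → ℕ, StrictMono r ∧ StrictMono c ∧
      ∃ h : ∀ x y : Fin (t i), (r x, c y) ∈ ladderRegion a b n i ∧ (r x, c y) ∈ Lhat,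
      p = Matrix.det (Matrix.of fun x y =>
        (MvPolynomial.X (Sum.inl ⟨(r x, c y), (h x y).2⟩) : MvPolynomial (↥Lhat ⊕ ↥E) K))}

/-!
An algebra map out of `K[L]/I_t(L)[x_{u,v}⁻¹]` is a matrix supported on `L` whose `(u, v)` entry
is invertible and whose `t_i`-minors in `L_i` vanish, so it suffices to match such matrices with
those for the right-hand side, naturally in the target. Subtracting `x_{r,v} x_{u,c} x_{u,v}⁻¹`
from the entries of `L_j ∪ ⋯ ∪ L_k` off row `u` and column `v` does this. On `L_i` with
`j ≤ i ≤ k` the result is the Schur complement of the pivot, whose `(t_i - 1)`-minors vanish exactly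
when the `t_i`-minors of the original do. On `L_i` with `k < i`, which meets row `u` but not column
`v`, the substitution only adds multiples of row `u` to other rows, hence preserves the vanishing
of `t_i`-minors; on `L_i` with `i < j` it does the same with columns. The permutation of rows and
columns in the construction of `L̂` turns the remaining blocks into the regions of `L̂`.
-/

open scoped Ring

section Minors

variable {ι κ S : Type*} [CommRing S] {M N : Matrix ι κ S} {R : Set ι} {C : Set κ} {t : ℕ}
  {u : ι} {v : κ}

/-- Every `t`-minor of the (possibly infinite) matrix `M` with rows in `R` and columns in `C`
vanishes. Row and column indices may repeat or come in any order, which does not change the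
condition but makes it stable under reindexing. -/
def MinorsVanish (M : Matrix ι κ S) (R : Set ι) (C : Set κ) (t : ℕ) : Prop :=
  ∀ (r : Fin t → ι) (c : Fin t → κ), (∀ x, r x ∈ R) → (∀ y, c y ∈ C) → (M.submatrix r c).det = 0

theorem MinorsVanish.det_submatrix_eq_zero {m : Type*} [Fintype m] [DecidableEq m]
    (hM : MinorsVanish M R C t) (hm : Fintype.card m = t) {r : m → ι} {c : m → κ}
    (hr : ∀ x, r x ∈ R) (hc : ∀ y, c y ∈ C) : (M.submatrix r c).det = 0 := by
  rw [← Matrix.det_submatrix_equiv_self (Fintype.equivFinOfCardEq hm).symm]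
  exact hM _ _ (fun x => hr _) (fun y => hc _)

theorem MinorsVanish.congr (hM : MinorsVanish M R C t) (h : ∀ r ∈ R, ∀ c ∈ C, M r c = N r c) :
    MinorsVanish N R C t := by
  intro r c hr hc
  rw [← hM r c hr hc]
  exact congrArg _ (Matrix.ext fun x y => (h _ (hr x) _ (hc y)).symm)

theorem minorsVanish_congr (h : ∀ r ∈ R, ∀ c ∈ C, M r c = N r c) :
    MinorsVanish M R C t ↔ MinorsVanish N R C t :=
  ⟨fun hM => hM.congr h, fun hN => hN.congr fun r hr c hc => (h r hr c hc).symm⟩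

theorem minorsVanish_transpose : MinorsVanish M.transpose C R t ↔ MinorsVanish M R C t := by
  constructor <;> intro h r c hr hc <;> rw [← Matrix.det_transpose] <;> exact h c r hc hr

theorem minorsVanish_submatrix_equiv {ι' κ' : Type*} (σ : ι' ≃ ι) (τ : κ' ≃ κ) :
    MinorsVanish (M.submatrix σ τ) (σ ⁻¹' R) (τ ⁻¹' C) t ↔ MinorsVanish M R C t := by
  refine ⟨fun h r c hr hc => ?_, fun h r c hr hc => h _ _ hr hc⟩
  simpa [← Function.comp_assoc] using
    h (σ.symm ∘ r) (τ.symm ∘ c) (by simpa using hr) (by simpa using hc)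

theorem MinorsVanish.of_strictMono [LinearOrder ι] [LinearOrder κ]
    (h : ∀ (r : Fin t → ι) (c : Fin t → κ), StrictMono r → StrictMono c →
      (∀ x, r x ∈ R) → (∀ y, c y ∈ C) → (M.submatrix r c).det = 0) :
    MinorsVanish M R C t := by
  intro r c hr hc
  by_cases hr_inj : r.Injective
  swap
  · obtain ⟨x, x', hxx', hne⟩ := Function.not_injective_iff.1 hr_inj
    exact Matrix.det_zero_of_row_eq hne (funext fun y => by simp [hxx'])
  by_cases hc_inj : c.Injective
  swap
  · obtain ⟨y, y', hyy', hne⟩ := Function.not_injective_iff.1 hc_inj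
    exact Matrix.det_zero_of_column_eq hne fun x => by simp [hyy']
  have hsorted := h (r ∘ Tuple.sort r) (c ∘ Tuple.sort c)
    ((Tuple.monotone_sort r).strictMono_of_injective (hr_inj.comp (Tuple.sort r).injective))
    ((Tuple.monotone_sort c).strictMono_of_injective (hc_inj.comp (Tuple.sort c).injective))
    (fun x => hr _) (fun y => hc _)
  have hsign (π : Equiv.Perm (Fin t)) : IsUnit ((Equiv.Perm.sign π : ℤ) : S) :=
    (Equiv.Perm.sign π).isUnit.map (Int.castRingHom S)
  rw [← Matrix.submatrix_submatrix M r c, ← Function.comp_id (Tuple.sort r),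
    ← Function.id_comp (Tuple.sort c), ← Matrix.submatrix_submatrix, Matrix.det_permute',
    Matrix.det_permute] at hsorted
  exact (hsign _).mul_right_eq_zero.1 ((hsign _).mul_right_eq_zero.1 hsorted)

theorem MinorsVanish.succ (hM : MinorsVanish M R C t) : MinorsVanish M R C (t + 1) := by
  intro r c hr hc
  rw [Matrix.det_succ_column_zero]
  refine Finset.sum_eq_zero fun x _ => mul_eq_zero_of_right _ ?_
  rw [Matrix.submatrix_submatrix]
  exact hM _ _ (fun _ => hr _) (fun _ => hc _)

theorem minorsVanish_sdiff_singleton_iff (hrow : ∀ c, M u c = 0) (hcol : ∀ r, M r v = 0) :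
    MinorsVanish M (R \ {u}) (C \ {v}) t ↔ MinorsVanish M R C t := by
  refine ⟨fun h r c hr hc => ?_, fun h r c hr hc => h r c (fun x => (hr x).1) fun y => (hc y).1⟩
  by_cases hru : ∃ x, r x = u
  · obtain ⟨x, hx⟩ := hru
    exact Matrix.det_eq_zero_of_row_eq_zero x fun y => by simp [hx, hrow]
  by_cases hcv : ∃ y, c y = v
  · obtain ⟨y, hy⟩ := hcv
    exact Matrix.det_eq_zero_of_column_eq_zero y fun x => by simp [hy, hcol]
  exact h r c (fun x => ⟨hr x, fun hx => hru ⟨x, hx⟩⟩) fun y => ⟨hc y, fun hy => hcv ⟨y, hy⟩⟩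

end Minors

section RankOneUpdate

variable {S : Type*} [CommRing S]

theorem det_add_vecMulVec {m : Type*} [Fintype m] [DecidableEq m] (A : Matrix m m S)
    (q l : m → S) :
    (A + Matrix.vecMulVec q l).det = A.det + ∑ x, q x * (A.updateRow x l).det := by
  suffices h : ∀ T : Finset m, (A + Matrix.vecMulVec (fun x => if x ∈ T then q x else 0) l).det =
      A.det + ∑ x ∈ T, q x * (A.updateRow x l).det by
    simpa using h Finset.univ
  intro T
  induction T using Finset.induction_on with
  | empty => simp [← Pi.zero_def]
  | insert x T hx ih =>
    set B := A + Matrix.vecMulVec (fun x => if x ∈ T then q x else 0) l with hB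
    have hinsert : A + Matrix.vecMulVec (fun y => if y ∈ insert x T then q y else 0) l =
        B.updateRow x (B x + q x • l) := by
      ext y z
      by_cases hy : y = x <;> simp [hB, hy, hx, Matrix.vecMulVec_apply]
    have hrow : (B.updateRow x l).det = (A.updateRow x l).det := by
      refine Matrix.det_eq_of_forall_row_eq_smul_add_const (fun x => if x ∈ T then q x else 0) x
        (by simp [hx]) fun y z => ?_
      by_cases hy : y = x <;> simp [hB, hy, hx, Matrix.vecMulVec_apply]
    rw [hinsert, Matrix.det_updateRow_add, Matrix.updateRow_eq_self, Matrix.det_updateRow_smul,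
      hrow, ih, Finset.sum_insert hx]
    ring

theorem det_fromBlocks_unit {m : Type*} [Fintype m] [DecidableEq m] {d : S} (hd : IsUnit d)
    (q l : m → S) (D : Matrix m m S) :
    (Matrix.fromBlocks (Matrix.of fun _ _ : Unit => d) (Matrix.replicateRow Unit l)
      (Matrix.replicateCol Unit q) D).det = d * (D - d⁻¹ʳ • Matrix.vecMulVec q l).det := by
  let _ : Invertible (Matrix.of fun _ _ : Unit => d) :=
    ⟨Matrix.of fun _ _ => d⁻¹ʳ, by ext; simp [Matrix.mul_apply, Ring.inverse_mul_cancel _ hd],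
      by ext; simp [Matrix.mul_apply, Ring.mul_inverse_cancel _ hd]⟩
  rw [Matrix.det_fromBlocks₁₁, Matrix.det_unique]
  congr 3
  ext x y
  simp only [Matrix.mul_apply, Matrix.vecMulVec_apply, Matrix.smul_apply, Matrix.replicateRow_apply,
    Matrix.replicateCol_apply, Finset.univ_unique, Finset.sum_singleton, smul_eq_mul]
  exact (congrArg (· * l y) (mul_comm _ _)).trans (mul_assoc _ _ _)

variable {ι κ : Type*} {M : Matrix ι κ S} {R : Set ι} {C : Set κ} {t : ℕ} {u : ι} {v : κ}

theorem MinorsVanish.add_vecMulVec_row (hM : MinorsVanish M R C t) (hu : u ∈ R) (q : ι → S) :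
    MinorsVanish (M + Matrix.vecMulVec q (M u)) R C t := by
  intro r c hr hc
  have hupdate (x : Fin t) : (M.submatrix r c).updateRow x (M u ∘ c) =
      M.submatrix (Function.update r x u) c := by
    ext y z
    by_cases hy : y = x <;> simp [hy]
  have hmem (x y : Fin t) : Function.update r x u y ∈ R := by
    by_cases hy : y = x <;> simp [hy, hu, hr]
  have hsub : (M + Matrix.vecMulVec q (M u)).submatrix r c =
      M.submatrix r c + Matrix.vecMulVec (q ∘ r) (M u ∘ c) := rfl
  simp [hsub, det_add_vecMulVec, hM r c hr hc, hupdate, hM _ c (hmem _) hc]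

theorem MinorsVanish.add_vecMulVec (hM : MinorsVanish M R C t) (q : ι → S) (l : κ → S) :
    MinorsVanish (M + Matrix.vecMulVec q l) R C (t + 1) := by
  intro r c hr hc
  have hadjugate : ((M.submatrix r c).transpose).adjugate = 0 := by
    ext x y
    rw [Matrix.adjugate_fin_succ_eq_det_submatrix]
    refine mul_eq_zero_of_right _ ?_
    exact minorsVanish_transpose.2 hM _ _ (fun _ => hc _) fun _ => hr _
  have hupdate (x : Fin (t + 1)) : ((M.submatrix r c).updateRow x (l ∘ c)).det = 0 := by
    rw [← Matrix.cramer_transpose_apply, Matrix.cramer_eq_adjugate_mulVec, hadjugate]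
    simp
  have hsub : (M + Matrix.vecMulVec q l).submatrix r c =
      M.submatrix r c + Matrix.vecMulVec (q ∘ r) (l ∘ c) := rfl
  simp [hsub, det_add_vecMulVec, hM.succ r c hr hc, hupdate]

/-- The Schur complement `M r c - M r v * M u c / M u v` of the entry at `(u, v)`, with row `u` and
column `v` (which it annihilates if `M u v` is a unit) not deleted. -/
noncomputable def entrySchurComplement (M : Matrix ι κ S) (u : ι) (v : κ) : Matrix ι κ S :=
  M - (M u v)⁻¹ʳ • Matrix.vecMulVec (fun r => M r v) (M u)

theorem minorsVanish_succ_iff_entrySchurComplement (hu : u ∈ R) (hv : v ∈ C)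
    (huv : IsUnit (M u v)) :
    MinorsVanish M R C (t + 1) ↔ MinorsVanish (entrySchurComplement M u v) R C t := by
  constructor
  · intro hM r c hr hc
    have hminor := hM.det_submatrix_eq_zero (m := Unit ⊕ Fin t) (by simp [add_comm])
      (r := Sum.elim (fun _ => u) r) (c := Sum.elim (fun _ => v) c)
      (by simp [hu, hr]) (by simp [hv, hc])
    have hblocks : M.submatrix (Sum.elim (fun _ : Unit => u) r) (Sum.elim (fun _ : Unit => v) c) =
        Matrix.fromBlocks (Matrix.of fun _ _ => M u v) (Matrix.replicateRow Unit (M u ∘ c))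
          (Matrix.replicateCol Unit fun x => M (r x) v) (M.submatrix r c) := by
      ext (x | x) (y | y) <;> rfl
    rw [hblocks, det_fromBlocks_unit huv] at hminor
    exact huv.mul_right_eq_zero.1 hminor
  · intro hM
    have hsum : M = entrySchurComplement M u v +
        Matrix.vecMulVec ((M u v)⁻¹ʳ • fun r => M r v) (M u) := by
      rw [entrySchurComplement, Matrix.smul_vecMulVec, sub_add_cancel]
    rw [hsum]
    exact hM.add_vecMulVec _ _

theorem minorsVanish_succ_iff_entrySchurComplement_sdiff (hu : u ∈ R) (hv : v ∈ C)
    (huv : IsUnit (M u v)) :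
    MinorsVanish M R C (t + 1) ↔
      MinorsVanish (entrySchurComplement M u v) (R \ {u}) (C \ {v}) t := by
  rw [minorsVanish_succ_iff_entrySchurComplement hu hv huv, minorsVanish_sdiff_singleton_iff]
  · intro c
    simp [entrySchurComplement, Matrix.vecMulVec_apply, Ring.inverse_mul_cancel_left _ _ huv]
  · intro r
    simp [entrySchurComplement, Matrix.vecMulVec_apply, mul_left_comm _ (M r v),
      Ring.inverse_mul_cancel _ huv]

end RankOneUpdate

section PivotShift

variable {ι κ S T : Type*} [CommRing S] [CommRing T] {P : Set (ι × κ)} {M : Matrix ι κ S}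
  {R : Set ι} {C : Set κ} {t : ℕ} {u : ι} {v : κ} {q : S}

open Classical in
/-- Adds `q * M r v * M u c` to the entries of `M` at the positions `(r, c) ∈ P` off row `u` and
column `v`. -/
noncomputable def pivotShift (P : Set (ι × κ)) (u : ι) (v : κ) (q : S) (M : Matrix ι κ S) :
    Matrix ι κ S :=
  Matrix.of fun r c => if (r, c) ∈ P ∧ r ≠ u ∧ c ≠ v then M r c + q * M r v * M u c else M r c

theorem pivotShift_apply_of_mem {r : ι} {c : κ} (hrc : (r, c) ∈ P) (hr : r ≠ u) (hc : c ≠ v) :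
    pivotShift P u v q M r c = M r c + q * M r v * M u c :=
  if_pos ⟨hrc, hr, hc⟩

theorem pivotShift_apply_of_notMem {r : ι} {c : κ} (hrc : (r, c) ∉ P) :
    pivotShift P u v q M r c = M r c :=
  if_neg fun h => hrc h.1

theorem pivotShift_apply_row (c : κ) : pivotShift P u v q M u c = M u c :=
  if_neg fun h => h.2.1 rfl

theorem pivotShift_neg_pivotShift : pivotShift P u v (-q) (pivotShift P u v q M) = M := by
  ext r c
  by_cases h : (r, c) ∈ P ∧ r ≠ u ∧ c ≠ v <;> simp [pivotShift, h]

theorem pivotShift_pivotShift_neg : pivotShift P u v q (pivotShift P u v (-q) M) = M := by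
  simpa using pivotShift_neg_pivotShift (q := -q)

theorem map_pivotShift (F : S →+* T) :
    (pivotShift P u v q M).map F = pivotShift P u v (F q) (M.map F) := by
  ext r c
  by_cases h : (r, c) ∈ P ∧ r ≠ u ∧ c ≠ v <;> simp [pivotShift, h]

theorem transpose_pivotShift :
    (pivotShift P u v q M).transpose = pivotShift (Prod.swap ⁻¹' P) v u q M.transpose := by
  classical
  ext c r
  exact if_congr (and_congr_right' and_comm) (congrArg _ (mul_right_comm _ _ _)) rfl

/-- Inside a block that avoids column `v` but meets row `u`, shifting along a set of full rows adds
multiples of row `u` to the other rows. -/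
theorem MinorsVanish.pivotShift_of_row (hM : MinorsVanish M R C t) (hu : u ∈ R) (hv : v ∉ C)
    {A : Set ι} (hP : ∀ r ∈ R, ∀ c ∈ C, (r, c) ∈ P ↔ r ∈ A) :
    MinorsVanish (pivotShift P u v q M) R C t := by
  classical
  refine (hM.add_vecMulVec_row hu fun r => if r ∈ A ∧ r ≠ u then q * M r v else 0).congr
    fun r hr c hc => ?_
  have hcv : c ≠ v := fun h => hv (h ▸ hc)
  by_cases h : r ∈ A ∧ r ≠ u <;> simp [pivotShift, Matrix.vecMulVec_apply, hP r hr c hc, hcv, h]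

theorem minorsVanish_pivotShift_iff_of_row (hu : u ∈ R) (hv : v ∉ C) {A : Set ι}
    (hP : ∀ r ∈ R, ∀ c ∈ C, (r, c) ∈ P ↔ r ∈ A) :
    MinorsVanish (pivotShift P u v q M) R C t ↔ MinorsVanish M R C t := by
  refine ⟨fun h => ?_, fun h => h.pivotShift_of_row hu hv hP⟩
  rw [← pivotShift_neg_pivotShift (P := P) (u := u) (v := v) (q := q) (M := M)]
  exact h.pivotShift_of_row hu hv hP

theorem minorsVanish_pivotShift_iff_of_column (hu : u ∉ R) (hv : v ∈ C) {A : Set κ}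
    (hP : ∀ r ∈ R, ∀ c ∈ C, (r, c) ∈ P ↔ c ∈ A) :
    MinorsVanish (pivotShift P u v q M) R C t ↔ MinorsVanish M R C t := by
  rw [← minorsVanish_transpose, transpose_pivotShift,
    minorsVanish_pivotShift_iff_of_row hv hu (A := A) fun c hc r hr => hP r hr c hc,
    minorsVanish_transpose]

end PivotShift

section PivotClear

variable {ι κ S T : Type*} [CommRing S] [CommRing T] {P : Set (ι × κ)} {M : Matrix ι κ S}
  {R : Set ι} {C : Set κ} {t : ℕ} {u : ι} {v : κ}

/-- The substitution `x_{r,c} ↦ x_{r,c} - x_{r,v} x_{u,c} x_{u,v}⁻¹` on the positions in `P` off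
row `u` and column `v`. -/
noncomputable def pivotClear (P : Set (ι × κ)) (u : ι) (v : κ) (M : Matrix ι κ S) : Matrix ι κ S :=
  pivotShift P u v (-(M u v)⁻¹ʳ) M

/-- The substitution `x_{r,c} ↦ x_{r,c} + x_{r,v} x_{u,c} x_{u,v}⁻¹` on the positions in `P` off
row `u` and column `v`, inverse to `pivotClear`. -/
noncomputable def pivotRestore (P : Set (ι × κ)) (u : ι) (v : κ) (M : Matrix ι κ S) :
    Matrix ι κ S :=
  pivotShift P u v (M u v)⁻¹ʳ M

theorem pivotClear_pivotRestore : pivotClear P u v (pivotRestore P u v M) = M := by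
  rw [pivotClear, pivotRestore, pivotShift_apply_row, pivotShift_neg_pivotShift]

theorem pivotRestore_pivotClear : pivotRestore P u v (pivotClear P u v M) = M := by
  rw [pivotClear, pivotRestore, pivotShift_apply_row, pivotShift_pivotShift_neg]

theorem map_ringInverse_of_isUnit (F : S →+* T) {x : S} (hx : IsUnit x) : F x⁻¹ʳ = (F x)⁻¹ʳ := by
  obtain ⟨x, rfl⟩ := hx
  rw [Ring.inverse_unit]
  exact (Ring.inverse_unit (Units.map (F : S →* T) x)).symm

theorem map_pivotClear (F : S →+* T) (huv : IsUnit (M u v)) :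
    (pivotClear P u v M).map F = pivotClear P u v (M.map F) := by
  rw [pivotClear, map_pivotShift, map_neg, map_ringInverse_of_isUnit F huv]
  rfl

theorem map_pivotRestore (F : S →+* T) (huv : IsUnit (M u v)) :
    (pivotRestore P u v M).map F = pivotRestore P u v (M.map F) := by
  rw [pivotRestore, map_pivotShift, map_ringInverse_of_isUnit F huv]
  rfl

theorem minorsVanish_succ_iff_pivotClear (hu : u ∈ R) (hv : v ∈ C) (huv : IsUnit (M u v))
    (hP : R ×ˢ C ⊆ P) :
    MinorsVanish M R C (t + 1) ↔ MinorsVanish (pivotClear P u v M) (R \ {u}) (C \ {v}) t := by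
  rw [minorsVanish_succ_iff_entrySchurComplement_sdiff hu hv huv]
  refine minorsVanish_congr fun r hr c hc => ?_
  rw [pivotClear, pivotShift_apply_of_mem (hP ⟨hr.1, hc.1⟩) hr.2 hc.2]
  simp only [entrySchurComplement, Matrix.sub_apply, Matrix.smul_apply, Matrix.vecMulVec_apply,
    smul_eq_mul]
  ring

end PivotClear

section LocAwayAlgebra

variable {R A : Type*} [CommSemiring R] [CommRing A] [Algebra R A] (x : A)

theorem locAwayAlgebra_eq_oreLocalization :
    locAwayAlgebra x = (OreLocalization.instAlgebra : Algebra R (Localization.Away x)) :=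
  Algebra.algebra_ext _ _ fun _ => rfl

instance isLocalization_away_locAwayAlgebra :
    @IsLocalization.Away A _ x (Localization.Away x) _ (locAwayAlgebra x) :=
  locAwayAlgebra_eq_oreLocalization (R := A) x ▸ Localization.isLocalization

instance isScalarTower_locAwayAlgebra :
    @IsScalarTower R A (Localization.Away x) _ (locAwayAlgebra x).toSMul
      (locAwayAlgebra x).toSMul :=
  @IsScalarTower.of_algebraMap_eq' R A (Localization.Away x) _ _ _ _ (locAwayAlgebra x)
    (locAwayAlgebra x) rfl

end LocAwayAlgebra

section QuotientAway

variable (R : Type*) {A : Type*} [CommSemiring R] [CommRing A] [Algebra R A] (I : Ideal A)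
  (S : Type*) [CommRing S] [Algebra R S] [Algebra (A ⧸ I) S] [IsScalarTower R (A ⧸ I) S]

/-- The canonical map from `A` to an algebra `S` over `A ⧸ I`. -/
def quotientToAlgHom : A →ₐ[R] S :=
  (IsScalarTower.toAlgHom R (A ⧸ I) S).comp (Ideal.Quotient.mkₐ R I)

theorem le_ker_quotientToAlgHom : I ≤ RingHom.ker (quotientToAlgHom R I S) := fun z hz => by
  simp [quotientToAlgHom, Ideal.Quotient.eq_zero_iff_mem.2 hz]

variable (x : A) [IsLocalization.Away (Ideal.Quotient.mk I x) S]

theorem isUnit_quotientToAlgHom : IsUnit (quotientToAlgHom R I S x) :=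
  IsLocalization.Away.algebraMap_isUnit (Ideal.Quotient.mk I x)

variable {R I S} {T : Type*} [CommRing T] [Algebra R T]

theorem exists_comp_quotientToAlgHom_eq {f : A →ₐ[R] T} (hI : I ≤ RingHom.ker f)
    (hx : IsUnit (f x)) : ∃ F : S →ₐ[R] T, F.comp (quotientToAlgHom R I S) = f := by
  have hunit (z : Submonoid.powers (Ideal.Quotient.mk I x)) :
      IsUnit (Ideal.Quotient.liftₐ I f hI z) := by
    obtain ⟨_, m, rfl⟩ := z
    rw [map_pow]
    exact hx.pow m
  refine ⟨IsLocalization.liftAlgHom hunit, AlgHom.ext fun z => ?_⟩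
  exact IsLocalization.lift_eq hunit (Ideal.Quotient.mk I z)

theorem algHom_ext_of_quotient_localization (N : Submonoid (A ⧸ I)) [IsLocalization N S]
    {F G : S →ₐ[R] T} (h : F.comp (quotientToAlgHom R I S) = G.comp (quotientToAlgHom R I S)) :
    F = G :=
  IsLocalization.algHom_ext N (Ideal.Quotient.algHom_ext R h)

theorem nonempty_algEquiv_of_quotient_away {B : Type*} [CommRing B] [Algebra R B] {J : Ideal B}
    [Algebra (B ⧸ J) T] [IsScalarTower R (B ⧸ J) T] (y : B)
    [IsLocalization.Away (Ideal.Quotient.mk J y) T] {f : A →ₐ[R] T} {g : B →ₐ[R] S}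
    (hfI : I ≤ RingHom.ker f) (hfx : IsUnit (f x)) (hgJ : J ≤ RingHom.ker g) (hgy : IsUnit (g y))
    (hgf : ∀ F : S →ₐ[R] T, F.comp (quotientToAlgHom R I S) = f →
      F.comp g = quotientToAlgHom R J T)
    (hfg : ∀ G : T →ₐ[R] S, G.comp (quotientToAlgHom R J T) = g →
      G.comp f = quotientToAlgHom R I S) :
    Nonempty (S ≃ₐ[R] T) := by
  obtain ⟨F, hF⟩ := exists_comp_quotientToAlgHom_eq (S := S) x hfI hfx
  obtain ⟨G, hG⟩ := exists_comp_quotientToAlgHom_eq (S := T) y hgJ hgy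
  refine ⟨AlgEquiv.ofAlgHom F G ?_ ?_⟩
  · refine algHom_ext_of_quotient_localization (.powers (Ideal.Quotient.mk J y)) ?_
    rw [AlgHom.comp_assoc, hG, hgf F hF, AlgHom.id_comp]
  · refine algHom_ext_of_quotient_localization (.powers (Ideal.Quotient.mk I x)) ?_
    rw [AlgHom.comp_assoc, hF, hfg G hG, AlgHom.id_comp]

end QuotientAway

/-- The permutation of `ℕ` that moves `p` to `q` and shifts the interval `(p, q]` down by one. It
relabels the rows of `L̂`, and its inverse relabels the columns. -/
def cycleEquiv {p q : ℕ} (hpq : p ≤ q) : ℕ ≃ ℕ where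
  toFun := rowPerm p q
  invFun := colPerm q p
  left_inv r := by grind [rowPerm, colPerm]
  right_inv r := by grind [rowPerm, colPerm]

/-- A one-sided ladder `L = L_1 ∪ ⋯ ∪ L_s` together with a position `(u, v)` lying in the regions
`L_j, …, L_k` but in no other region. The values `a 0` and `b (s + 1)` bound the ladder from
outside, so that the cases `j = 1` and `k = s` need no separate treatment. -/
structure IsPivotedLadder (L : Set (ℕ × ℕ)) (a b : ℕ → ℕ) (n s u v j k : ℕ) : Prop where
  one_le_j : 1 ≤ j
  j_le_k : j ≤ k
  k_le_s : k ≤ s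
  monotoneOn_a : MonotoneOn a (Set.Icc 0 s)
  monotoneOn_b : MonotoneOn b (Set.Icc 1 (s + 1))
  b_top_le : b (s + 1) ≤ n + 1
  a_lt_u : a (j - 1) < u
  u_le_a : u ≤ a j
  b_le_v : b k ≤ v
  v_lt_b : v < b (k + 1)
  eq_iUnion : L = ⋃ i ∈ Set.Icc 1 s, ladderRegion a b n i

/-- The union `L_j ∪ ⋯ ∪ L_k` of the regions through the pivot. -/
def pivotRegion (a b : ℕ → ℕ) (n j k : ℕ) : Set (ℕ × ℕ) :=
  ⋃ i ∈ Set.Icc j k, ladderRegion a b n i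

/-- The rows of `L_i`, without row `u` if `L_i` contains the pivot. -/
def keptRows (a : ℕ → ℕ) (u j k i : ℕ) : Set ℕ :=
  if j ≤ i ∧ i ≤ k then Set.Icc 1 (a i) \ {u} else Set.Icc 1 (a i)

/-- The columns of `L_i`, without column `v` if `L_i` contains the pivot. -/
def keptCols (b : ℕ → ℕ) (n v j k i : ℕ) : Set ℕ :=
  if j ≤ i ∧ i ≤ k then Set.Icc (b i) n \ {v} else Set.Icc (b i) n

theorem mem_iUnion_ladderRegion {a b : ℕ → ℕ} {n : ℕ} {I : Set ℕ} {p : ℕ × ℕ} :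
    p ∈ ⋃ i ∈ I, ladderRegion a b n i ↔
      ∃ i ∈ I, 1 ≤ p.1 ∧ p.1 ≤ a i ∧ b i ≤ p.2 ∧ p.2 ≤ n := by
  simp only [ladderRegion, Set.mem_iUnion₂, Set.mem_ofPred_eq, exists_prop]

namespace IsPivotedLadder

variable {L : Set (ℕ × ℕ)} {a b : ℕ → ℕ} {n s u v j k : ℕ}

theorem of_mem_iff (hmono : ∀ i, 1 ≤ i → i < s → a i ≤ a (i + 1) ∧ b i ≤ b (i + 1))
    (hbn : ∀ i ∈ Set.Icc 1 s, b i ≤ n) (hL : L = ⋃ i ∈ Set.Icc 1 s, ladderRegion a b n i)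
    (ha0 : a 0 = 0) (hbtop : b (s + 1) = n + 1) (hjk : 1 ≤ j ∧ j ≤ k ∧ k ≤ s)
    (huv : ∀ i ∈ Set.Icc 1 s, ((u, v) ∈ ladderRegion a b n i ↔ j ≤ i ∧ i ≤ k)) :
    IsPivotedLadder L a b n s u v j k := by
  obtain ⟨hj, hjk, hks⟩ := hjk
  have ha : MonotoneOn a (Set.Icc 0 s) := by
    refine monotoneOn_of_le_succ Set.ordConnected_Icc fun i _ hi hi' => ?_
    rcases i.eq_zero_or_pos with rfl | hpos
    · simp [ha0]
    · exact (hmono i hpos (Nat.lt_of_succ_le hi'.2)).1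
  have hb : MonotoneOn b (Set.Icc 1 (s + 1)) := by
    refine monotoneOn_of_le_succ Set.ordConnected_Icc fun i _ hi hi' => ?_
    rw [Order.succ_eq_add_one] at hi' ⊢
    rcases (Nat.le_of_succ_le_succ hi'.2).lt_or_eq with hlt | rfl
    · exact (hmono i hi.1 hlt).2
    · exact hbtop ▸ (hbn i ⟨hi.1, le_rfl⟩).trans n.le_succ
  obtain ⟨hu, huj, -, hv⟩ := (huv j ⟨hj, hjk.trans hks⟩).2 ⟨le_rfl, hjk⟩
  obtain ⟨-, huk, hvk, -⟩ := (huv k ⟨hj.trans hjk, hks⟩).2 ⟨hjk, le_rfl⟩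
  refine ⟨hj, hjk, hks, ha, hb, hbtop.le, ?_, huj, hvk, ?_, hL⟩
  · rcases hj.eq_or_lt with rfl | hj1
    · exact ha0 ▸ hu
    · have hnot := mt (huv (j - 1) ⟨by omega, by omega⟩).1 (by omega)
      have hbj : b (j - 1) ≤ b k := hb ⟨by omega, by omega⟩ ⟨by omega, by omega⟩ (by omega)
      by_contra! hle
      exact hnot ⟨hu, hle, hbj.trans hvk, hv⟩
  · rcases hks.eq_or_lt with rfl | hk
    · exact hbtop ▸ Nat.lt_succ_of_le hv
    · have hnot := mt (huv (k + 1) ⟨by omega, by omega⟩).1 (by omega)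
      have hak : a k ≤ a (k + 1) := ha ⟨by omega, by omega⟩ ⟨by omega, by omega⟩ (by omega)
      by_contra! hle
      exact hnot ⟨hu, huk.trans hak, hle, hv⟩

variable (h : IsPivotedLadder L a b n s u v j k) {i i' : ℕ}

include h

theorem a_le_a (hii' : i ≤ i') (hi' : i' ≤ s) : a i ≤ a i' :=
  h.monotoneOn_a ⟨i.zero_le, hii'.trans hi'⟩ ⟨i'.zero_le, hi'⟩ hii'

theorem b_le_b (hi : 1 ≤ i) (hii' : i ≤ i') (hi' : i' ≤ s + 1) : b i ≤ b i' :=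
  h.monotoneOn_b ⟨hi, hii'.trans hi'⟩ ⟨hi.trans hii', hi'⟩ hii'

theorem u_le_a_of_le (hi : j ≤ i) (his : i ≤ s) : u ≤ a i :=
  h.u_le_a.trans (h.a_le_a hi his)

theorem a_lt_u_of_lt (hi : i < j) : a i < u :=
  (h.a_le_a (Nat.le_sub_one_of_lt hi) (by have := h.j_le_k; have := h.k_le_s; omega)).trans_lt
    h.a_lt_u

theorem b_le_v_of_le (hi : 1 ≤ i) (hik : i ≤ k) : b i ≤ v :=
  (h.b_le_b hi hik (by have := h.k_le_s; omega)).trans h.b_le_v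

theorem v_lt_b_of_lt (hi : k < i) (his : i ≤ s) : v < b i :=
  h.v_lt_b.trans_le (h.b_le_b (by omega) hi (by omega))

theorem v_le_n : v ≤ n := by
  have := h.v_lt_b.trans_le (h.b_le_b (by omega) (Nat.add_le_add_right h.k_le_s 1) le_rfl)
  have := h.b_top_le
  omega

theorem pivotRegion_subset : pivotRegion a b n j k ⊆ L := by
  rw [h.eq_iUnion]
  exact Set.biUnion_subset_biUnion_left (Set.Icc_subset_Icc h.one_le_j h.k_le_s)

theorem mem_pivotRegion_iff_of_lt {r c : ℕ} (hi : i < j) (hr : r ∈ Set.Icc 1 (a i))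
    (hc : c ∈ Set.Icc (b i) n) : (r, c) ∈ pivotRegion a b n j k ↔ c ∈ {c | b j ≤ c} := by
  rw [pivotRegion, mem_iUnion_ladderRegion]
  have hks := h.k_le_s
  constructor
  · rintro ⟨i', hi', -, -, hbc, -⟩
    exact (h.b_le_b h.one_le_j hi'.1 (by have := hi'.2; omega)).trans hbc
  · intro hbc
    exact ⟨j, ⟨le_rfl, h.j_le_k⟩, hr.1, hr.2.trans (h.a_le_a hi.le (h.j_le_k.trans hks)), hbc, hc.2⟩

theorem mem_pivotRegion_iff_of_gt {r c : ℕ} (hi : k < i) (his : i ≤ s)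
    (hr : r ∈ Set.Icc 1 (a i)) (hc : c ∈ Set.Icc (b i) n) :
    (r, c) ∈ pivotRegion a b n j k ↔ r ∈ {r | r ≤ a k} := by
  rw [pivotRegion, mem_iUnion_ladderRegion]
  have hk := h.one_le_j.trans h.j_le_k
  constructor
  · rintro ⟨i', hi', -, hra, -, -⟩
    exact hra.trans (h.a_le_a hi'.2 h.k_le_s)
  · intro hra
    exact ⟨k, ⟨h.j_le_k, le_rfl⟩, hr.1, hra, (h.b_le_b hk hi.le (by omega)).trans hc.1, hc.2⟩

theorem minorsVanish_iff_pivotClear {S : Type*} [CommRing S] {W : Matrix ℕ ℕ S}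
    (hW : IsUnit (W u v)) (hi : i ∈ Set.Icc 1 s) {t : ℕ} (ht : j ≤ i → i ≤ k → 1 ≤ t) :
    MinorsVanish W (Set.Icc 1 (a i)) (Set.Icc (b i) n) t ↔
      MinorsVanish (pivotClear (pivotRegion a b n j k) u v W) (keptRows a u j k i)
        (keptCols b n v j k i) (if j ≤ i ∧ i ≤ k then t - 1 else t) := by
  have hu := Nat.one_le_of_lt h.a_lt_u
  have hv := h.v_le_n
  rcases lt_or_ge i j with hij | hji
  · have huR : u ∉ Set.Icc 1 (a i) := fun hmem => (h.a_lt_u_of_lt hij).not_ge hmem.2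
    have hvC : v ∈ Set.Icc (b i) n := ⟨h.b_le_v_of_le hi.1 (hij.le.trans h.j_le_k), hv⟩
    simpa [pivotClear, keptRows, keptCols, hij.not_ge] using
      (minorsVanish_pivotShift_iff_of_column huR hvC fun r hr c hc =>
        h.mem_pivotRegion_iff_of_lt hij hr hc).symm
  rcases lt_or_ge k i with hki | hik
  · have huR : u ∈ Set.Icc 1 (a i) := ⟨hu, h.u_le_a_of_le hji hi.2⟩
    have hvC : v ∉ Set.Icc (b i) n := fun hmem => (h.v_lt_b_of_lt hki hi.2).not_ge hmem.1
    simpa [pivotClear, keptRows, keptCols, hki.not_ge] using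
      (minorsVanish_pivotShift_iff_of_row huR hvC fun r hr c hc =>
        h.mem_pivotRegion_iff_of_gt hki hi.2 hr hc).symm
  · obtain ⟨t, rfl⟩ := Nat.exists_eq_add_of_le' (ht hji hik)
    have hP : Set.Icc 1 (a i) ×ˢ Set.Icc (b i) n ⊆ pivotRegion a b n j k := fun p hp =>
      mem_iUnion_ladderRegion.2 ⟨i, ⟨hji, hik⟩, hp.1.1, hp.1.2, hp.2.1, hp.2.2⟩
    have huR : u ∈ Set.Icc 1 (a i) := ⟨hu, h.u_le_a_of_le hji hi.2⟩
    have hvC : v ∈ Set.Icc (b i) n := ⟨h.b_le_v_of_le hi.1 hik, hv⟩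
    simpa [keptRows, keptCols, hji, hik] using minorsVanish_succ_iff_pivotClear huR hvC hW hP

theorem u_le_a_k : u ≤ a k :=
  h.u_le_a_of_le h.j_le_k h.k_le_s

theorem b_j_le_v : b j ≤ v :=
  h.b_le_v_of_le h.one_le_j h.j_le_k

theorem preimage_cycleEquiv_Icc (hi : i ∈ Set.Icc 1 s) :
    cycleEquiv h.u_le_a_k ⁻¹' Set.Icc 1 (if j ≤ i ∧ i ≤ k then a i - 1 else a i) =
      keptRows a u j k i := by
  have huk := h.u_le_a_k
  have hu := Nat.one_le_of_lt h.a_lt_u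
  have before : i < j → a i < u := h.a_lt_u_of_lt
  have after : k < i → a k ≤ a i := fun hki => h.a_le_a hki.le hi.2
  have through : j ≤ i → i ≤ k → u ≤ a i ∧ a i ≤ a k := fun hji hik =>
    ⟨h.u_le_a_of_le hji hi.2, h.a_le_a hik h.k_le_s⟩
  ext r
  simp only [cycleEquiv, Equiv.coe_fn_mk, rowPerm, keptRows, Set.mem_preimage]
  split_ifs <;> simp only [Set.mem_Icc, Set.mem_sdiff, Set.mem_singleton_iff] <;> omega

theorem preimage_cycleEquiv_symm_Icc (hi : i ∈ Set.Icc 1 s) :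
    (cycleEquiv h.b_j_le_v).symm ⁻¹' Set.Icc (if j ≤ i ∧ i ≤ k then b i + 1 else b i) n =
      keptCols b n v j k i := by
  have hvj := h.b_j_le_v
  have hv := h.v_le_n
  have before : i < j → b i ≤ b j := fun hij =>
    h.b_le_b hi.1 hij.le (by have := h.j_le_k; have := h.k_le_s; omega)
  have after : k < i → v < b i := fun hki => h.v_lt_b_of_lt hki hi.2
  have through : j ≤ i → i ≤ k → b j ≤ b i ∧ b i ≤ v := fun hji hik =>
    ⟨h.b_le_b h.one_le_j hji (by have := hi.2; omega), h.b_le_v_of_le hi.1 hik⟩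
  ext c
  simp only [cycleEquiv, Equiv.coe_fn_symm_mk, colPerm, keptCols, Set.mem_preimage]
  split_ifs <;> simp only [Set.mem_Icc, Set.mem_sdiff, Set.mem_singleton_iff] <;> omega

theorem mem_keptEntries {r c : ℕ} (hi : i ∈ Set.Icc 1 s) (hr : r ∈ keptRows a u j k i)
    (hc : c ∈ keptCols b n v j k i) : (r, c) ∈ keptEntries L a b u v j k := by
  have hL {r c : ℕ} (hr : r ∈ Set.Icc 1 (a i)) (hc : c ∈ Set.Icc (b i) n) : (r, c) ∈ L :=
    h.eq_iUnion ▸ mem_iUnion_ladderRegion.2 ⟨i, hi, hr.1, hr.2, hc.1, hc.2⟩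
  by_cases hthrough : j ≤ i ∧ i ≤ k
  · rw [keptRows, if_pos hthrough] at hr
    rw [keptCols, if_pos hthrough] at hc
    exact ⟨hL hr.1 hc.1, .inl ⟨hr.2, hc.2⟩⟩
  · rw [keptRows, if_neg hthrough] at hr
    rw [keptCols, if_neg hthrough] at hc
    refine ⟨hL hr hc, ?_⟩
    have before : i < j → a i ≤ a (j - 1) := fun hij =>
      h.a_le_a (by omega) (by have := h.j_le_k; have := h.k_le_s; omega)
    have after : k < i → b (k + 1) ≤ b i := fun hki =>
      h.b_le_b (by omega) hki (by have := hi.2; omega)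
    have := h.a_lt_u
    have := h.v_lt_b
    have := hr.2
    have := hc.1
    dsimp only
    omega

theorem disjoint_keptEntries_extraVars :
    Disjoint (keptEntries L a b u v j k) (extraVars a b u v j k) := by
  refine Set.disjoint_left.2 fun p hp hp' => ?_
  have hau := h.a_lt_u
  have hvb := h.v_lt_b
  simp only [keptEntries, extraVars, Set.mem_ofPred_eq] at hp hp'
  omega

theorem keptEntries_union_extraVars :
    keptEntries L a b u v j k ∪ extraVars a b u v j k = L := by
  have hks := h.k_le_s
  refine Set.Subset.antisymm (Set.union_subset (fun p hp => hp.1) ?_) fun p hp => ?_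
  · refine subset_trans ?_ h.pivotRegion_subset
    rintro ⟨r, c⟩ (⟨rfl, har, hrk⟩ | ⟨rfl, hjc, hcb⟩) <;> refine mem_iUnion_ladderRegion.2 ?_
    · exact ⟨k, ⟨h.j_le_k, le_rfl⟩, Nat.one_le_of_lt har, hrk, h.b_le_v, h.v_le_n⟩
    · have hbn := (h.b_le_b (by omega) (Nat.add_le_add_right hks 1) le_rfl).trans h.b_top_le
      exact ⟨j, ⟨le_rfl, h.j_le_k⟩, Nat.one_le_of_lt h.a_lt_u, h.u_le_a, hjc, by omega⟩
  · obtain ⟨i, hi, -, hra, hbc, -⟩ := mem_iUnion_ladderRegion.1 (h.eq_iUnion ▸ hp)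
    have hrow : p.1 = u → b j ≤ p.2 := fun hu => by
      have hji : j ≤ i := not_lt.1 fun hij => (h.a_lt_u_of_lt hij).not_ge (hu ▸ hra)
      exact (h.b_le_b h.one_le_j hji (by have := hi.2; omega)).trans hbc
    have hcol : p.2 = v → p.1 ≤ a k := fun hv => by
      have hik : i ≤ k := not_lt.1 fun hki => (h.v_lt_b_of_lt hki hi.2).not_ge (hv ▸ hbc)
      exact hra.trans (h.a_le_a hik hks)
    simp only [keptEntries, extraVars, Set.mem_union, Set.mem_ofPred_eq, hp, true_and]
    omega

/-- The bijection matching the variables of `K[L̂][E]` with those of `K[L]`: it undoes the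
relabelling on `L̂` and is the inclusion on `E`. -/
noncomputable def hatEquiv :
    ladderHat L a b u v j k ⊕ extraVars a b u v j k ≃ L :=
  open Classical in
  ((((cycleEquiv h.u_le_a_k).prodCongr (cycleEquiv h.b_j_le_v).symm).image
    (keptEntries L a b u v j k)).symm.sumCongr (Equiv.refl _)).trans <|
  (Equiv.Set.union h.disjoint_keptEntries_extraVars).symm.trans <|
    Equiv.setCongr h.keptEntries_union_extraVars

theorem hatEquiv_inr (p : extraVars a b u v j k) : (h.hatEquiv (.inr p) : ℕ × ℕ) = p :=
  rfl

theorem hatEquiv_inl {r c : ℕ} (hrc : (r, c) ∈ keptEntries L a b u v j k) :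
    h.hatEquiv (.inl ⟨(cycleEquiv h.u_le_a_k r, (cycleEquiv h.b_j_le_v).symm c),
      Set.mem_image_of_mem _ hrc⟩) = ⟨(r, c), hrc.1⟩ :=
  Subtype.ext <| Prod.ext ((cycleEquiv h.u_le_a_k).symm_apply_apply r)
    ((cycleEquiv h.b_j_le_v).apply_symm_apply c)

theorem ladderRegion_hat_subset (hi : i ∈ Set.Icc 1 s) :
    ladderRegion (fun i => if j ≤ i ∧ i ≤ k then a i - 1 else a i)
      (fun i => if j ≤ i ∧ i ≤ k then b i + 1 else b i) n i ⊆ ladderHat L a b u v j k := by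
  rintro ⟨r, c⟩ ⟨hr_pos, hr_le, hc_ge, hc_le⟩
  have hr : (cycleEquiv h.u_le_a_k).symm r ∈ keptRows a u j k i := by
    rw [← h.preimage_cycleEquiv_Icc hi]
    simp [hr_pos, hr_le]
  have hc : cycleEquiv h.b_j_le_v c ∈ keptCols b n v j k i := by
    rw [← h.preimage_cycleEquiv_symm_Icc hi]
    simp [hc_ge, hc_le]
  exact ⟨_, h.mem_keptEntries hi hr hc, Prod.ext ((cycleEquiv h.u_le_a_k).apply_symm_apply r)
    ((cycleEquiv h.b_j_le_v).symm_apply_apply c)⟩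

end IsPivotedLadder

section CoordMatrix

variable {ι κ τ R S T : Type*} [CommSemiring R] [CommRing S] [Algebra R S] [CommRing T]
  [Algebra R T] {V : Set (ι × κ)}

/-- The matrix with entries `f` on `V` and `0` elsewhere. -/
noncomputable def zeroExtend (f : V → S) : Matrix ι κ S :=
  Matrix.of fun r c => Function.extend Subtype.val f 0 (r, c)

theorem zeroExtend_apply (f : V → S) {r : ι} {c : κ} (hrc : (r, c) ∈ V) :
    zeroExtend f r c = f ⟨(r, c), hrc⟩ :=
  Subtype.val_injective.extend_apply f 0 ⟨(r, c), hrc⟩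

theorem zeroExtend_apply_of_notMem (f : V → S) {r : ι} {c : κ} (hrc : (r, c) ∉ V) :
    zeroExtend f r c = 0 :=
  Function.extend_apply' f (0 : ι × κ → S) (r, c) fun ⟨p, hp⟩ => hrc (hp ▸ p.2)

/-- The matrix of the images under `φ` of the variables, placed on `V` by the bijection `e`. It
identifies the `S`-points of affine space with the matrices supported on `V`. -/
noncomputable def coordMatrix (e : τ ≃ V) (φ : MvPolynomial τ R →ₐ[R] S) : Matrix ι κ S :=
  zeroExtend fun p => φ (X (e.symm p))

variable (e : τ ≃ V)

theorem coordMatrix_comp (F : S →ₐ[R] T) (φ : MvPolynomial τ R →ₐ[R] S) :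
    coordMatrix e (F.comp φ) = (coordMatrix e φ).map F := by
  ext r c
  by_cases hrc : (r, c) ∈ V
  · simp [coordMatrix, zeroExtend_apply, hrc]
  · simp [coordMatrix, zeroExtend_apply_of_notMem, hrc]

variable {e} in
theorem coordMatrix_apply {q : τ} {r : ι} {c : κ} (hq : (e q : ι × κ) = (r, c))
    (φ : MvPolynomial τ R →ₐ[R] S) : coordMatrix e φ r c = φ (X q) := by
  have hrc : (r, c) ∈ V := hq ▸ (e q).2
  rw [coordMatrix, zeroExtend_apply _ hrc, e.symm_apply_eq.2 (Subtype.ext hq.symm)]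

theorem coordMatrix_refl_apply {r : ι} {c : κ} (hrc : (r, c) ∈ V) (φ : MvPolynomial V R →ₐ[R] S) :
    coordMatrix (.refl V) φ r c = φ (X ⟨(r, c), hrc⟩) :=
  zeroExtend_apply _ hrc

theorem coordMatrix_injective :
    Function.Injective (coordMatrix e : (MvPolynomial τ R →ₐ[R] S) → Matrix ι κ S) := by
  intro φ ψ h
  ext q
  rw [← coordMatrix_apply (e := e) (q := q) rfl φ, h, coordMatrix_apply rfl]

theorem exists_coordMatrix_eq {M : Matrix ι κ S} (hM : ∀ r c, (r, c) ∉ V → M r c = 0) :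
    ∃ φ : MvPolynomial τ R →ₐ[R] S, coordMatrix e φ = M := by
  refine ⟨aeval fun q => M (e q).1.1 (e q).1.2, ?_⟩
  ext r c
  by_cases hrc : (r, c) ∈ V
  · simp [coordMatrix, zeroExtend_apply, hrc]
  · rw [coordMatrix, zeroExtend_apply_of_notMem _ hrc, hM r c hrc]

theorem exists_coordMatrix_eq_pivotShift {τ' : Type*} (e' : τ' ≃ V) {P : Set (ι × κ)} (hP : P ⊆ V)
    (u : ι) (v : κ) (q : S) (φ : MvPolynomial τ R →ₐ[R] S) :
    ∃ ψ : MvPolynomial τ' R →ₐ[R] S,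
      coordMatrix e' ψ = pivotShift P u v q (coordMatrix e φ) := by
  refine exists_coordMatrix_eq e' fun r c hrc => ?_
  rw [pivotShift_apply_of_notMem fun h => hrc (hP h), coordMatrix, zeroExtend_apply_of_notMem _ hrc]

variable {e} {τ' : Type*} {e' : τ' ≃ V} {P : Set (ι × κ)} {u : ι} {v : κ}
  {φ : MvPolynomial τ R →ₐ[R] S} {ψ : MvPolynomial τ' R →ₐ[R] S}

theorem coordMatrix_comp_of_eq_pivotClear (F : S →ₐ[R] T) (hφ : IsUnit (coordMatrix e φ u v))
    (hψ : coordMatrix e' ψ = pivotClear P u v (coordMatrix e φ)) :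
    coordMatrix e' (F.comp ψ) = pivotClear P u v (coordMatrix e (F.comp φ)) := by
  rw [coordMatrix_comp, hψ, coordMatrix_comp]
  exact map_pivotClear (F : S →+* T) hφ

theorem coordMatrix_comp_of_eq_pivotRestore (F : S →ₐ[R] T) (hφ : IsUnit (coordMatrix e φ u v))
    (hψ : coordMatrix e' ψ = pivotRestore P u v (coordMatrix e φ)) :
    coordMatrix e' (F.comp ψ) = pivotRestore P u v (coordMatrix e (F.comp φ)) := by
  rw [coordMatrix_comp, hψ, coordMatrix_comp]
  exact map_pivotRestore (F : S →+* T) hφ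

end CoordMatrix

section LadderMinorIdeal

variable {A S : Type*} [CommRing A] [CommRing S] {V : Set (ℕ × ℕ)} {a b t : ℕ → ℕ} {n s : ℕ}

/-- The ideal generated by the minors of size `t i` in the regions `L_i` of the ladder-shaped
matrix with entries `ξ`. -/
def ladderMinorIdeal (ξ : V → A) (a b t : ℕ → ℕ) (n s : ℕ) : Ideal A :=
  ⨆ i ∈ Set.Icc 1 s, Ideal.span
    {p | ∃ r c : Fin (t i) → ℕ, StrictMono r ∧ StrictMono c ∧
      ∃ h : ∀ x y : Fin (t i), (r x, c y) ∈ ladderRegion a b n i ∧ (r x, c y) ∈ V,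
      p = Matrix.det (Matrix.of fun x y => ξ ⟨(r x, c y), (h x y).2⟩)}

theorem ladderMinorIdeal_le_ker_iff (hV : ∀ i ∈ Set.Icc 1 s, ladderRegion a b n i ⊆ V)
    (ξ : V → A) {F : Type*} [FunLike F A S] [RingHomClass F A S] (f : F) :
    ladderMinorIdeal ξ a b t n s ≤ RingHom.ker f ↔ ∀ i ∈ Set.Icc 1 s,
      MinorsVanish (zeroExtend (f ∘ ξ)) (Set.Icc 1 (a i)) (Set.Icc (b i) n) (t i) := by
  have hdet {m : ℕ} {r c : Fin m → ℕ} (h : ∀ x y, (r x, c y) ∈ V) :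
      f (Matrix.det (Matrix.of fun x y => ξ ⟨(r x, c y), h x y⟩)) =
        ((zeroExtend (f ∘ ξ)).submatrix r c).det := by
    refine ((f : A →+* S).map_det _).trans (congrArg _ (Matrix.ext fun x y => ?_))
    exact (zeroExtend_apply (f ∘ ξ) (h x y)).symm
  simp only [ladderMinorIdeal, iSup₂_le_iff, Ideal.span_le]
  refine forall₂_congr fun i hi => ⟨fun h => .of_strictMono fun r c hr hc hrR hcC => ?_, ?_⟩
  · have hregion (x y) : (r x, c y) ∈ ladderRegion a b n i :=
      ⟨(hrR x).1, (hrR x).2, (hcC y).1, (hcC y).2⟩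
    rw [← hdet fun x y => hV i hi (hregion x y)]
    exact h ⟨r, c, hr, hc, fun x y => ⟨hregion x y, hV i hi (hregion x y)⟩, rfl⟩
  · rintro h _ ⟨r, c, -, -, hrc, rfl⟩
    rw [SetLike.mem_coe, RingHom.mem_ker, hdet fun x y => (hrc x y).2]
    rcases isEmpty_or_nonempty (Fin (t i)) with hempty | ⟨⟨z⟩⟩
    · exact h r c hempty.elim hempty.elim
    · exact h r c (fun x => ⟨(hrc x z).1.1, (hrc x z).1.2.1⟩)
        fun y => ⟨(hrc z y).1.2.2.1, (hrc z y).1.2.2.2⟩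

end LadderMinorIdeal

section MixedLadderIdeal

/-- The ideal `I_r(L̂)` of `K[L̂][E]`, where the distinguished points `(a_i, b_i)` and the sizes
`t_i` with `j ≤ i ≤ k` are replaced by `(a_i - 1, b_i + 1)` and `t_i - 1`. -/
noncomputable abbrev pivotedLadderIdealHat (K : Type*) [Field K] (L : Set (ℕ × ℕ)) (a b t : ℕ → ℕ)
    (n s u v j k : ℕ) :
    Ideal (MvPolynomial (ladderHat L a b u v j k ⊕ extraVars a b u v j k) K) :=
  mixedLadderIdealHat K (ladderHat L a b u v j k) (extraVars a b u v j k)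
    (fun i => if j ≤ i ∧ i ≤ k then a i - 1 else a i)
    (fun i => if j ≤ i ∧ i ≤ k then b i + 1 else b i)
    (fun i => if j ≤ i ∧ i ≤ k then t i - 1 else t i) n s

variable {S : Type*} [CommRing S] [Algebra K S] {L : Set (ℕ × ℕ)} {a b t : ℕ → ℕ}
  {n s u v j k : ℕ}

theorem mixedLadderIdeal_le_ker_iff {V : Set (ℕ × ℕ)}
    (hV : ∀ i ∈ Set.Icc 1 s, ladderRegion a b n i ⊆ V) (φ : MvPolynomial V K →ₐ[K] S) :
    mixedLadderIdeal K V a b t n s ≤ RingHom.ker φ ↔ ∀ i ∈ Set.Icc 1 s,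
      MinorsVanish (coordMatrix (.refl V) φ) (Set.Icc 1 (a i)) (Set.Icc (b i) n) (t i) :=
  ladderMinorIdeal_le_ker_iff hV X φ

namespace IsPivotedLadder

variable (h : IsPivotedLadder L a b n s u v j k)

theorem pivotedLadderIdealHat_le_ker_iff
    (ψ : MvPolynomial (ladderHat L a b u v j k ⊕ extraVars a b u v j k) K →ₐ[K] S) :
    pivotedLadderIdealHat K L a b t n s u v j k ≤ RingHom.ker ψ ↔ ∀ i ∈ Set.Icc 1 s,
      MinorsVanish (coordMatrix h.hatEquiv ψ) (keptRows a u j k i) (keptCols b n v j k i)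
        (if j ≤ i ∧ i ≤ k then t i - 1 else t i) := by
  refine (ladderMinorIdeal_le_ker_iff (fun i hi => h.ladderRegion_hat_subset hi)
    (fun p => X (Sum.inl p)) ψ).trans <| forall₂_congr fun i hi => ?_
  rw [← minorsVanish_submatrix_equiv (cycleEquiv h.u_le_a_k) (cycleEquiv h.b_j_le_v).symm,
    h.preimage_cycleEquiv_Icc hi, h.preimage_cycleEquiv_symm_Icc hi]
  refine minorsVanish_congr fun r hr c hc => ?_
  have hkept := h.mem_keptEntries hi hr hc
  have hhat : (rowPerm u (a k) r, colPerm v (b j) c) ∈ ladderHat L a b u v j k :=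
    ⟨(r, c), hkept, rfl⟩
  exact (zeroExtend_apply (fun p => ψ (X (Sum.inl p))) hhat).trans
    (coordMatrix_apply (congrArg Subtype.val (h.hatEquiv_inl hkept)) ψ).symm

theorem mixedLadderIdeal_le_ker_iff_pivotedLadderIdealHat_le_ker
    (ht : ∀ i, j ≤ i → i ≤ k → 1 ≤ t i) {φ : MvPolynomial L K →ₐ[K] S}
    {ψ : MvPolynomial (ladderHat L a b u v j k ⊕ extraVars a b u v j k) K →ₐ[K] S}
    (hφ : IsUnit (coordMatrix (.refl L) φ u v))
    (hψ : coordMatrix h.hatEquiv ψ =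
      pivotClear (pivotRegion a b n j k) u v (coordMatrix (.refl L) φ)) :
    mixedLadderIdeal K L a b t n s ≤ RingHom.ker φ ↔
      pivotedLadderIdealHat K L a b t n s u v j k ≤ RingHom.ker ψ := by
  rw [mixedLadderIdeal_le_ker_iff (fun i hi => h.eq_iUnion ▸ Set.subset_biUnion_of_mem hi),
    h.pivotedLadderIdealHat_le_ker_iff, hψ]
  exact forall₂_congr fun i hi => h.minorsVanish_iff_pivotClear hφ hi (ht i)

end IsPivotedLadder

theorem mixedLadderIdeal_localization_general (h : IsPivotedLadder L a b n s u v j k)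
    (ht : ∀ i, j ≤ i → i ≤ k → 1 ≤ t i) (hLuv : (u, v) ∈ L)
    (hEuv : (u, v) ∈ extraVars a b u v j k)
    [Algebra (MvPolynomial L K ⧸ mixedLadderIdeal K L a b t n s) S]
    [IsScalarTower K (MvPolynomial L K ⧸ mixedLadderIdeal K L a b t n s) S]
    [IsLocalization.Away (Ideal.Quotient.mk (mixedLadderIdeal K L a b t n s) (X ⟨(u, v), hLuv⟩)) S]
    {T : Type*} [CommRing T] [Algebra K T]
    [Algebra (MvPolynomial _ K ⧸ pivotedLadderIdealHat K L a b t n s u v j k) T]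
    [IsScalarTower K (MvPolynomial _ K ⧸ pivotedLadderIdealHat K L a b t n s u v j k) T]
    [IsLocalization.Away (Ideal.Quotient.mk (pivotedLadderIdealHat K L a b t n s u v j k)
      (X (Sum.inr ⟨(u, v), hEuv⟩))) T] :
    Nonempty (S ≃ₐ[K] T) := by
  let π := quotientToAlgHom K (mixedLadderIdeal K L a b t n s) S
  let ρ := quotientToAlgHom K (pivotedLadderIdealHat K L a b t n s u v j k) T
  have hπ : IsUnit (coordMatrix (.refl L) π u v) :=
    coordMatrix_refl_apply hLuv π ▸ isUnit_quotientToAlgHom K _ S _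
  have hρ : IsUnit (coordMatrix h.hatEquiv ρ u v) :=
    coordMatrix_apply (h.hatEquiv_inr ⟨(u, v), hEuv⟩) ρ ▸ isUnit_quotientToAlgHom K _ T _
  obtain ⟨f, hf⟩ : ∃ f, coordMatrix (.refl L) f =
      pivotRestore (pivotRegion a b n j k) u v (coordMatrix h.hatEquiv ρ) :=
    exists_coordMatrix_eq_pivotShift _ _ h.pivotRegion_subset u v _ ρ
  obtain ⟨g, hg⟩ : ∃ g, coordMatrix h.hatEquiv g =
      pivotClear (pivotRegion a b n j k) u v (coordMatrix (.refl L) π) :=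
    exists_coordMatrix_eq_pivotShift _ _ h.pivotRegion_subset u v _ π
  have hfuv : IsUnit (coordMatrix (.refl L) f u v) := by
    rwa [hf, pivotRestore, pivotShift_apply_row]
  have hguv : IsUnit (coordMatrix h.hatEquiv g u v) := by
    rwa [hg, pivotClear, pivotShift_apply_row]
  have hρf : coordMatrix h.hatEquiv ρ =
      pivotClear (pivotRegion a b n j k) u v (coordMatrix (.refl L) f) := by
    rw [hf, pivotClear_pivotRestore]
  refine nonempty_algEquiv_of_quotient_away (X ⟨(u, v), hLuv⟩) (X (Sum.inr ⟨(u, v), hEuv⟩))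
    (f := f) (g := g)
    ((h.mixedLadderIdeal_le_ker_iff_pivotedLadderIdealHat_le_ker ht hfuv hρf).2
      (le_ker_quotientToAlgHom K _ T))
    (coordMatrix_refl_apply hLuv f ▸ hfuv)
    ((h.mixedLadderIdeal_le_ker_iff_pivotedLadderIdealHat_le_ker ht hπ hg).1
      (le_ker_quotientToAlgHom K _ S))
    (coordMatrix_apply (h.hatEquiv_inr ⟨(u, v), hEuv⟩) g ▸ hguv)
    (fun F hF => coordMatrix_injective h.hatEquiv ?_)
    (fun G hG => coordMatrix_injective (.refl L) ?_)
  · rw [coordMatrix_comp_of_eq_pivotClear F hπ hg, hF, hρf]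
  · rw [coordMatrix_comp_of_eq_pivotRestore G hρ hf, hG, hg, pivotRestore_pivotClear]

end MixedLadderIdeal

/-- **localization lemma.** Let `L` be a one-sided ladder with distinguished
points `(a_1,b_1),…,(a_s,b_s)` and sizes `t`, and let `(u,v) ∈ L` lie exactly in the regions
`L_j,…,L_k`, with `t_i ≥ 2` for `j ≤ i ≤ k`.  Let `L̂` be the modified ladder, with
distinguished points `(a_i - 1, b_i + 1)` for `j ≤ i ≤ k` (the others unchanged) and sizes
`r = (t_1,…,t_{j-1}, t_j - 1, …, t_k - 1, t_{k+1},…,t_s)`.  Then there is a `K`-algebra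
isomorphism
`K[L]/I_t(L)[x_{u,v}⁻¹] ≅ K[L̂]/I_r(L̂)[x_{a_{j-1}+1,v},…,x_{a_k,v},x_{u,b_j},…,x_{u,b_{k+1}-1},x_{u,v}⁻¹]`. -/
theorem mixedLadderIdeal_localization (m n s : ℕ) (hm : 1 ≤ m) (hmn : m ≤ n) (hs : 1 ≤ s)
    (L : Set (ℕ × ℕ)) (a b t : ℕ → ℕ) (u v j k : ℕ)
    (hLsub : L ⊆ Set.Icc 1 m ×ˢ Set.Icc 1 n)
    (hrange : ∀ i ∈ Set.Icc 1 s, 1 ≤ a i ∧ a i ≤ m ∧ 1 ≤ b i ∧ b i ≤ n)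
    (hmono : ∀ i, 1 ≤ i → i < s → a i ≤ a (i + 1) ∧ b i ≤ b (i + 1))
    (hborder : ∀ i ∈ Set.Icc 1 s, (a i, b i) ∈ L ∧ (a i + 1, b i - 1) ∉ L)
    (hdecomp : L = ⋃ i ∈ Set.Icc 1 s, ladderRegion a b n i)
    (ha0 : a 0 = 0) (hbtop : b (s + 1) = n + 1)
    (hjk : 1 ≤ j ∧ j ≤ k ∧ k ≤ s)
    (ht2 : ∀ i, j ≤ i → i ≤ k → 2 ≤ t i)
    (hsize : ∀ i ∈ Set.Icc 1 s, 1 ≤ t i ∧ t i ≤ min (a i) (m - b i + 1))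
    (hexact : ∀ i ∈ Set.Icc 1 s, ((u, v) ∈ ladderRegion a b n i ↔ j ≤ i ∧ i ≤ k))
    (hLuv : (u, v) ∈ L)
    (hEuv : (u, v) ∈ extraVars a b u v j k) :
    Nonempty
      ((Localization.Away
          ((Ideal.Quotient.mk (mixedLadderIdeal K L a b t n s))
            (MvPolynomial.X ⟨(u, v), hLuv⟩))) ≃ₐ[K]
       (Localization.Away
          ((Ideal.Quotient.mk (mixedLadderIdealHat K
              (ladderHat L a b u v j k) (extraVars a b u v j k)
              (fun i => if j ≤ i ∧ i ≤ k then a i - 1 else a i)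
              (fun i => if j ≤ i ∧ i ≤ k then b i + 1 else b i)
              (fun i => if j ≤ i ∧ i ≤ k then t i - 1 else t i) n s))
            (MvPolynomial.X (Sum.inr ⟨(u, v), hEuv⟩))))) := by
  have hladder : IsPivotedLadder L a b n s u v j k :=
    .of_mem_iff hmono (fun i hi => (hrange i hi).2.2.2) hdecomp ha0 hbtop hjk hexact
  exact mixedLadderIdeal_localization_general hladder
    (fun i hji hik => one_le_two.trans (ht2 i hji hik)) hLuv hEuv
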